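/- arXiv:2210.02103 — 3 statements merged into one kernel-verified Lean document; each statement's English description precedes it below -/
import Mathlib

section
/- Let (k,′) be a differential field of characteristic zero, α, β ∈ kˣ, Q = (α,β)_k, and let ξ be an element of an algebraic closure of k with ξ² = α, with k(ξ) carrying the unique extension of ′. Let a ∈ k and d = d_{(u,v)} + ∂_{au}. Then (Q,d) is split by some finite differential field extension of (k,′) if and only if there exist a natural number n ≥ 1 and a nonzero θ ∈ k(ξ) such that a = θ′/(nξθ). -/
open scoped TensorProduct

/-- A derivation on a (possibly noncommutative) ring: an additive map satisfying the
Leibniz rule. -/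
structure IsRingDeriv {A : Type*} [Ring A] (d : A → A) : Prop where
  map_add : ∀ x y, d (x + y) = d x + d y
  leibniz : ∀ x y, d (x * y) = d x * y + x * d y

/-- The derivation `d` on the `k`-algebra `A` restricts to the derivation `δ` on `k`
(along `algebraMap k A`). -/
def RestrictsTo {k A : Type*} [CommRing k] [Ring A] [Algebra k A]
    (δ : k → k) (d : A → A) : Prop :=
  ∀ c : k, d (algebraMap k A c) = algebraMap k A (δ c)

/-- The differential algebra `(Q, d)` over `(k, δk)` is split by the differential field
`(L, δL)`: there is an `L`-algebra isomorphism `L ⊗[k] Q ≃ M₂(L)` intertwining the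
induced derivation `d* = δL ⊗ id + id ⊗ d` with the coordinate-wise derivation on `M₂(L)`. -/
def DiffSplits (k : Type*) [Field k] (Q : Type*) [Ring Q] [Algebra k Q]
    (d : Q → Q) (L : Type*) [Field L] [Algebra k L] (δL : L → L) : Prop :=
  ∃ D : L ⊗[k] Q → L ⊗[k] Q,
    IsRingDeriv D ∧
    (∀ (y : L) (x : Q), D (y ⊗ₜ[k] x) = δL y ⊗ₜ[k] x + y ⊗ₜ[k] d x) ∧
    ∃ φ : (L ⊗[k] Q) ≃ₐ[L] Matrix (Fin 2) (Fin 2) L,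
      ∀ z, φ (D z) = (φ z).map δL

universe u

/-!
A splitting of `(Q, d)` over `L` amounts to a pair of `2 × 2` matrices `U`, `V` over `L` which
satisfy the relations of `u`, `v` and the same linear differential equations. Given such a pair and
a square root `ζ` of `α`, the matrix `(ζ + U) V` is nonzero and is multiplied by a scalar under
differentiation, because `(ζ + U) U = ζ (ζ + U)`. If `y` is a nonzero entry, `αβ / y²` has
logarithmic derivative `4aζ`. To return to `k(ξ)`, let `p` be the minimal polynomial of an element
with `y′ = c y`: uniqueness of `p` forces `p^δ + c X p′ = (deg p) c p`, so the constant coefficient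
of `p` has logarithmic derivative `(deg p) c`.

Conversely, if `θ′ / θ = n a ξ`, `ηⁿ = θ` and `γ² = β`, then `η′ / η = a ξ` and the matrices
`diag(ξ, -ξ)` and `antidiag(γ / η², γ η²)` give a splitting.
-/

open Differential Polynomial

namespace IsRingDeriv

section Ring

variable {A B : Type*} [Ring A] [Ring B] {d : A → A} {D : B → B}

theorem map_zero (hd : IsRingDeriv d) : d 0 = 0 := by
  simpa using hd.map_add 0 0

theorem map_one (hd : IsRingDeriv d) : d 1 = 0 := by
  simpa using hd.leibniz 1 1

theorem matrix_map {n : Type*} [Fintype n] [DecidableEq n] (hd : IsRingDeriv d) :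
    IsRingDeriv fun M : Matrix n n A ↦ M.map d where
  map_add _ _ := by
    ext
    simp [hd.map_add]
  leibniz M N := by
    let d' : A →+ A := AddMonoidHom.mk' d hd.map_add
    ext i j
    change d' (∑ l, M i l * N l j) = ∑ l, d (M i l) * N l j + ∑ l, M i l * d (N l j)
    rw [map_sum, ← Finset.sum_add_distrib]
    exact Finset.sum_congr rfl fun l _ ↦ hd.leibniz (M i l) (N l j)

theorem ringEquiv_conj (e : A ≃+* B) (hD : IsRingDeriv D) :
    IsRingDeriv fun x ↦ e.symm (D (e x)) where
  map_add x y := by simp only [_root_.map_add, hD.map_add]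
  leibniz x y := by simp only [map_mul, hD.leibniz, _root_.map_add, RingEquiv.symm_apply_apply]

theorem algHom_deriv_of_adjoin_eq_top {k : Type*} [CommRing k] [Algebra k A] [Algebra k B]
    {δ : k → k} (hd : IsRingDeriv d) (hD : IsRingDeriv D) (hδd : RestrictsTo δ d)
    (hδD : RestrictsTo δ D) {s : Set A} (hs : Algebra.adjoin k s = ⊤) (f : A →ₐ[k] B)
    (hf : ∀ x ∈ s, f (d x) = D (f x)) (x : A) : f (d x) = D (f x) := by
  induction hs.ge (Algebra.mem_top (x := x)) using Algebra.adjoin_induction with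
  | mem x hx => exact hf x hx
  | algebraMap c => rw [hδd, f.commutes, f.commutes, hδD]
  | add x y _ _ hx hy => simp only [hd.map_add, hD.map_add, _root_.map_add, hx, hy]
  | mul x y _ _ hx hy => simp only [hd.leibniz, hD.leibniz, _root_.map_add, map_mul, hx, hy]

end Ring

/-- A derivation of a commutative ring, regarded as a structure of differential ring. -/
abbrev toDifferential {A : Type*} [CommRing A] {δ : A → A} (hδ : IsRingDeriv δ) :
    Differential A where
  deriv := Derivation.mk' (AddMonoidHom.mk' δ hδ.map_add).toIntLinearMap fun x y ↦ by
    simp only [AddMonoidHom.coe_toIntLinearMap, AddMonoidHom.mk'_apply, hδ.leibniz, smul_eq_mul]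
    ring

end IsRingDeriv

theorem isRingDeriv_deriv (A : Type*) [CommRing A] [Differential A] :
    IsRingDeriv fun x : A ↦ x′ where
  map_add := map_add _
  leibniz x y := by
    rw [Derivation.leibniz, smul_eq_mul, smul_eq_mul]
    ring

section LogDeriv

theorem deriv_eq_logDeriv_mul {K : Type*} [Field K] [Differential K] (x : K) :
    x′ = logDeriv x * x := by
  rcases eq_or_ne x 0 with rfl | hx
  · simp
  · exact (div_mul_cancel₀ _ hx).symm

theorem logDeriv_eq_mul_mul_iff {K : Type*} [Field K] [Differential K] {c m x y : K} (hm : m ≠ 0)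
    (hx : x ≠ 0) (hy : y ≠ 0) : logDeriv y = m * (c * x) ↔ c = y′ / (m * x * y) := by
  rw [Differential.logDeriv, div_eq_iff hy, eq_div_iff (mul_ne_zero (mul_ne_zero hm hx) hy),
    eq_comm]
  ring_nf

variable {K M : Type*} [Field K] [Field M] [Differential K] [Differential M] [Algebra K M]
  [DifferentialAlgebra K M]

theorem logDeriv_of_pow_eq_algebraMap {n : ℕ} (hn : (n : M) ≠ 0) {x : M} {b : K}
    (h : x ^ n = algebraMap K M b) : logDeriv x = algebraMap K M (logDeriv b) / n := by
  rw [← logDeriv_algebraMap, ← h, Differential.logDeriv_pow, mul_div_cancel_left₀ _ hn]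

theorem deriv_of_sq_eq_algebraMap [NeZero (2 : M)] {x : M} {b : K} (h : x ^ 2 = algebraMap K M b) :
    x′ = (logDeriv b / 2) • x := by
  rw [deriv_eq_logDeriv_mul, logDeriv_of_pow_eq_algebraMap (by simpa using two_ne_zero' M) h,
    Algebra.smul_def, map_div₀, map_ofNat, Nat.cast_ofNat]

theorem coeff_implicitDeriv_C_mul_X (c : K) (p : K[X]) (i : ℕ) :
    (implicitDeriv (C c * X) p).coeff i = (p.coeff i)′ + i * c * p.coeff i := by
  have hderiv : implicitDeriv (C c * X) p = mapCoeffs p + C c * (X * derivative p) := by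
    simp [implicitDeriv, mul_assoc]
  cases i <;> simp [hderiv, coeff_X_mul, coeff_derivative]
  ring

theorem implicitDeriv_C_mul_X_minpoly {y : M} (hy : IsIntegral K y) {c : K}
    (hc : y′ = algebraMap K M c * y) :
    implicitDeriv (C c * X) (minpoly K y) =
      minpoly K y * C ((minpoly K y).natDegree * c) := by
  set p := minpoly K y
  set q := implicitDeriv (C c * X) p
  have hp : p.Monic := minpoly.monic hy
  have hdvd : p ∣ q := minpoly.dvd K y <| by
    rw [← deriv_aeval_eq_implicitDeriv y _ (by simpa using hc), minpoly.aeval, Derivation.map_zero]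
  have hdeg : q.natDegree ≤ p.natDegree := natDegree_le_iff_coeff_eq_zero.2 fun i hi ↦ by
    simp [q, coeff_implicitDeriv_C_mul_X, coeff_eq_zero_of_natDegree_lt hi]
  have hq := eq_mul_leadingCoeff_of_monic_of_dvd_of_natDegree_le hp hdvd hdeg
  have hlead : p.natDegree * c = q.leadingCoeff := by
    simpa [q, coeff_implicitDeriv_C_mul_X, hp.coeff_natDegree] using
      congrArg (coeff · p.natDegree) hq
  rw [hlead, ← hq]

theorem exists_logDeriv_eq_natCast_mul_of_isIntegral {y : M} (hy : y ≠ 0) (hint : IsIntegral K y)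
    {c : K} (hc : logDeriv y = algebraMap K M c) :
    ∃ n : ℕ, n ≠ 0 ∧ ∃ θ : K, θ ≠ 0 ∧ logDeriv θ = n * c := by
  have hθ := minpoly.coeff_zero_ne_zero hint hy
  refine ⟨(minpoly K y).natDegree, (minpoly.natDegree_pos hint).ne', _, hθ, ?_⟩
  have hminpoly := implicitDeriv_C_mul_X_minpoly hint (hc ▸ deriv_eq_logDeriv_mul y)
  have hcoeff := congrArg (coeff · 0) hminpoly
  simp only [coeff_implicitDeriv_C_mul_X, Nat.cast_zero, zero_mul, add_zero, coeff_mul_C] at hcoeff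
  rw [Differential.logDeriv, hcoeff, mul_div_cancel_left₀ _ hθ]

end LogDeriv

section FiniteExtensions

theorem finiteDimensional_of_adjoin_simple_eq_top {k K : Type*} [Field k] [Field K] [Algebra k K]
    {x : K} (hx : IsIntegral k x) (h : IntermediateField.adjoin k {x} = ⊤) :
    FiniteDimensional k K := by
  have := IntermediateField.adjoin.finiteDimensional hx
  rw [h] at this
  exact IntermediateField.topEquiv.toLinearEquiv.finiteDimensional

theorem exists_common_finite_extension (k K L : Type u) [Field k] [Field K] [Field L] [Algebra k K]
    [Algebra k L] [FiniteDimensional k K] [FiniteDimensional k L] :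
    ∃ (M : Type u) (_ : Field M) (_ : Algebra k M), FiniteDimensional k M ∧
      Nonempty (K →ₐ[k] M) ∧ Nonempty (L →ₐ[k] M) := by
  obtain ⟨m, hm⟩ := Ideal.exists_maximal (K ⊗[k] L)
  let π := Ideal.Quotient.mkₐ k m
  exact ⟨K ⊗[k] L ⧸ m, Ideal.Quotient.field m, inferInstance, inferInstance,
    ⟨π.comp Algebra.TensorProduct.includeLeft⟩, ⟨π.comp Algebra.TensorProduct.includeRight⟩⟩

theorem exists_finite_extension_pow_eq (K : Type u) [Field K] (b c : K) {m n : ℕ} (hm : m ≠ 0)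
    (hn : n ≠ 0) :
    ∃ (L : Type u) (_ : Field L) (_ : Algebra K L), FiniteDimensional K L ∧
      ∃ x y : L, x ^ m = algebraMap K L b ∧ y ^ n = algebraMap K L c := by
  let Ω := AlgebraicClosure K
  obtain ⟨x, hx⟩ := IsAlgClosed.exists_pow_nat_eq (algebraMap K Ω b) (Nat.pos_of_ne_zero hm)
  obtain ⟨y, hy⟩ := IsAlgClosed.exists_pow_nat_eq (algebraMap K Ω c) (Nat.pos_of_ne_zero hn)
  have hfin : FiniteDimensional K (IntermediateField.adjoin K {x, y}) :=
    IntermediateField.finiteDimensional_adjoin_pair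
      (Algebra.IsIntegral.isIntegral x) (Algebra.IsIntegral.isIntegral y)
  exact ⟨_, _, _, hfin, ⟨x, IntermediateField.subset_adjoin _ _ (by simp)⟩,
    ⟨y, IntermediateField.subset_adjoin _ _ (by simp)⟩, Subtype.ext hx, Subtype.ext hy⟩

end FiniteExtensions

section Quaternion

variable {k Q A : Type*} [CommRing k] [Ring Q] [Ring A] [Algebra k Q] [Algebra k A] {α β : k}
  {u v : Q} {U V : A}

/-- The copy of the relations of the quaternion algebra `(α, β)` given by two anticommuting square
roots `u` of `α` and `v` of `β` in an algebra. -/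
@[simps]
def quaternionBasisOfAnticommute (hu : u * u = algebraMap k Q α) (hv : v * v = algebraMap k Q β)
    (huv : v * u = -(u * v)) : QuaternionAlgebra.Basis Q α 0 β where
  i := u
  j := v
  k := u * v
  i_mul_i := by rw [hu, Algebra.algebraMap_eq_smul_one, zero_smul, add_zero]
  j_mul_j := by rw [hv, Algebra.algebraMap_eq_smul_one]
  i_mul_j := rfl
  j_mul_i := by rw [huv, zero_smul, zero_sub]

theorem bijective_liftHom_quaternionBasisOfAnticommute (hu : u * u = algebraMap k Q α)
    (hv : v * v = algebraMap k Q β) (huv : v * u = -(u * v)) (b : Module.Basis (Fin 4) k Q)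
    (hb : ⇑b = ![1, u, v, u * v]) :
    Function.Bijective (quaternionBasisOfAnticommute hu hv huv).liftHom := by
  have heq : ⇑(quaternionBasisOfAnticommute hu hv huv).liftHom =
      (QuaternionAlgebra.linearEquivTuple α 0 β).trans b.equivFun.symm := by
    funext x
    rw [LinearEquiv.trans_apply, Module.Basis.equivFun_symm_apply, hb]
    simp [QuaternionAlgebra.Basis.lift, Fin.sum_univ_four, Algebra.algebraMap_eq_smul_one]
  exact heq ▸ LinearEquiv.bijective _

theorem exists_algHom_of_anticommute (hu : u * u = algebraMap k Q α)
    (hv : v * v = algebraMap k Q β) (huv : v * u = -(u * v)) (b : Module.Basis (Fin 4) k Q)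
    (hb : ⇑b = ![1, u, v, u * v]) (hU : U * U = algebraMap k A α) (hV : V * V = algebraMap k A β)
    (hUV : V * U = -(U * V)) :
    ∃ f : Q →ₐ[k] A, f u = U ∧ f v = V := by
  let q := quaternionBasisOfAnticommute hu hv huv
  let e := AlgEquiv.ofBijective q.liftHom
    (bijective_liftHom_quaternionBasisOfAnticommute hu hv huv b hb)
  let f := (quaternionBasisOfAnticommute hU hV hUV).liftHom.comp (e.symm : Q →ₐ[k] _)
  have hf (x) : f (q.liftHom x) = (quaternionBasisOfAnticommute hU hV hUV).liftHom x :=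
    congrArg (quaternionBasisOfAnticommute hU hV hUV).liftHom (e.symm_apply_apply x)
  refine ⟨f, ?_, ?_⟩
  · simpa [q, QuaternionAlgebra.Basis.lift] using hf (QuaternionAlgebra.Basis.self k).i
  · simpa [q, QuaternionAlgebra.Basis.lift] using hf (QuaternionAlgebra.Basis.self k).j

theorem adjoin_pair_eq_top_of_basis (b : Module.Basis (Fin 4) k Q)
    (hb : ⇑b = ![1, u, v, u * v]) : Algebra.adjoin k {u, v} = ⊤ := by
  have hu : u ∈ Algebra.adjoin k {u, v} := Algebra.subset_adjoin (by simp)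
  have hv : v ∈ Algebra.adjoin k {u, v} := Algebra.subset_adjoin (by simp)
  rw [← Algebra.toSubmodule_eq_top, ← top_le_iff, ← b.span_eq, Submodule.span_le, hb]
  rintro _ ⟨i, rfl⟩
  fin_cases i
  exacts [one_mem (Algebra.adjoin k {u, v}), hu, hv, mul_mem (S := Subalgebra k Q) hu hv]

end Quaternion

section LinearIndependence

theorem eq_zero_of_commute_of_anticommute {A : Type*} [Ring A] {w x y : A} (h2 : IsUnit (2 : A))
    (hw : IsUnit w) (hx : w * x = x * w) (hy : w * y = -(y * w)) (h : x + y = 0) : x = 0 := by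
  have htwo : 2 * (w * x) = 0 := calc
    2 * (w * x) = w * (x + y) + (x + y) * w := by
      rw [mul_add, add_mul, hy, ← hx]
      noncomm_ring
    _ = 0 := by rw [h, mul_zero, zero_mul, add_zero]
  rwa [h2.mul_right_eq_zero, hw.mul_right_eq_zero] at htwo

variable {K A : Type*} [Field K] [Ring A] [Algebra K A]

theorem isUnit_two_of_algebra (K A : Type*) [Field K] [Ring A] [Algebra K A] [NeZero (2 : K)] :
    IsUnit (2 : A) :=
  map_ofNat (algebraMap K A) 2 ▸ (two_ne_zero' K).isUnit.map (algebraMap K A)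

theorem isUnit_of_mul_self_eq_algebraMap {c : K} (hc : c ≠ 0) {w : A}
    (hw : w * w = algebraMap K A c) : IsUnit w :=
  ((Commute.refl w).isUnit_mul_iff.1 (hw ▸ hc.isUnit.map (algebraMap K A))).1

theorem linearIndependent_one_of_anticommute [NeZero (2 : K)] [Nontrivial A] {U V : A}
    (hU : IsUnit U) (hV : IsUnit V) (hUV : V * U = -(U * V)) : LinearIndependent K ![1, U] := by
  have h2 : IsUnit (2 : A) := isUnit_two_of_algebra K A
  refine LinearIndependent.pair_iff.2 fun s t h ↦ ?_
  have hs : s • (1 : A) = 0 := eq_zero_of_commute_of_anticommute h2 hV (by simp) (by simp [hUV]) h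
  rw [hs, zero_add] at h
  exact ⟨(smul_eq_zero_iff_left one_ne_zero).1 hs, (smul_eq_zero_iff_left hU.ne_zero).1 h⟩

theorem linearIndependent_of_anticommute [NeZero (2 : K)] [Nontrivial A] {U V : A}
    (hU : IsUnit U) (hV : IsUnit V) (hUV : V * U = -(U * V)) :
    LinearIndependent K ![1, U, V, U * V] := by
  have h2 : IsUnit (2 : A) := isUnit_two_of_algebra K A
  have hli {s t : K} (h : s • (1 : A) + t • U = 0) : s = 0 ∧ t = 0 :=
    (linearIndependent_one_of_anticommute hU hV hUV).eq_zero_of_pair h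
  refine Fintype.linearIndependent_iff.2 fun g hg ↦ ?_
  have hsum : (g 0 • (1 : A) + g 1 • U) + (g 2 • (1 : A) + g 3 • U) * V = 0 := by
    simpa [Fin.sum_univ_four, add_mul, add_assoc] using hg
  have h01 : g 0 • (1 : A) + g 1 • U = 0 := by
    refine eq_zero_of_commute_of_anticommute h2 hU (by simp [mul_add, add_mul]) ?_ hsum
    rw [mul_assoc _ V U, hUV, mul_neg, neg_neg, ← mul_assoc, ← mul_assoc]
    simp [mul_add, add_mul]
  have h23 : g 2 • (1 : A) + g 3 • U = 0 := by rwa [h01, zero_add, hV.mul_left_eq_zero] at hsum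
  intro i
  fin_cases i
  exacts [(hli h01).1, (hli h01).2, (hli h23).1, (hli h23).2]

end LinearIndependence

section Splitting

variable {k Q L : Type*} [Field k] [Ring Q] [Algebra k Q] {d : Q → Q} [Field L] [Algebra k L]
  {δL : L → L}

theorem RestrictsTo.matrix_map {n : Type*} [Fintype n] [DecidableEq n] {δ : k → k}
    (hδL : IsRingDeriv δL) (h : RestrictsTo δ δL) :
    RestrictsTo δ fun M : Matrix n n L ↦ M.map δL := fun c ↦ by
  ext i j
  simp only [Matrix.map_apply, Matrix.algebraMap_matrix_apply]
  split_ifs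
  exacts [h c, hδL.map_zero]

theorem DiffSplits.exists_algHom (hδL : IsRingDeriv δL) (h : DiffSplits k Q d L δL) :
    ∃ f : Q →ₐ[k] Matrix (Fin 2) (Fin 2) L, ∀ x, f (d x) = (f x).map δL := by
  obtain ⟨D, -, hD, φ, hφ⟩ := h
  refine ⟨(AlgHom.liftEquiv k L Q _).symm φ, fun x ↦ ?_⟩
  change φ (1 ⊗ₜ d x) = (φ (1 ⊗ₜ x)).map δL
  rw [← hφ, hD, hδL.map_one, TensorProduct.zero_tmul, zero_add]

theorem DiffSplits.of_algHom (hδL : IsRingDeriv δL) (f : Q →ₐ[k] Matrix (Fin 2) (Fin 2) L)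
    (hf : ∀ x, f (d x) = (f x).map δL) (hbij : Function.Bijective (AlgHom.liftEquiv k L Q _ f)) :
    DiffSplits k Q d L δL := by
  let φ : L ⊗[k] Q ≃ₐ[L] Matrix (Fin 2) (Fin 2) L := AlgEquiv.ofBijective _ hbij
  have hφ : ∀ (y : L) (x : Q), φ (y ⊗ₜ x) = y • f x := AlgHom.liftEquiv_tmul f
  refine ⟨fun z ↦ φ.symm ((φ z).map δL), hδL.matrix_map.ringEquiv_conj φ.toRingEquiv,
    fun y x ↦ ?_, φ, fun z ↦ φ.apply_symm_apply _⟩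
  rw [AlgEquiv.symm_apply_eq, map_add, hφ, hφ, hφ, hf]
  ext i j
  exact hδL.leibniz y (f x i j)

theorem bijective_liftEquiv_of_anticommute [NeZero (2 : L)] {α β : k} (hα : α ≠ 0)
    (hβ : β ≠ 0) {u v : Q} (hu : u * u = algebraMap k Q α) (hv : v * v = algebraMap k Q β)
    (huv : v * u = -(u * v)) (b : Module.Basis (Fin 4) k Q) (hb : ⇑b = ![1, u, v, u * v])
    (f : Q →ₐ[k] Matrix (Fin 2) (Fin 2) L) : Function.Bijective (AlgHom.liftEquiv k L Q _ f) := by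
  have hfb : AlgHom.liftEquiv k L Q _ f ∘ b.baseChange L = ![1, f u, f v, f u * f v] := by
    funext i
    fin_cases i <;> simp [hb, AlgHom.liftEquiv_tmul]
  have hli : LinearIndependent L (AlgHom.liftEquiv k L Q _ f ∘ b.baseChange L) := by
    rw [hfb]
    refine linearIndependent_of_anticommute
      ((isUnit_of_mul_self_eq_algebraMap hα hu).map f)
      ((isUnit_of_mul_self_eq_algebraMap hβ hv).map f) ?_
    rw [← map_mul, huv, map_neg, map_mul]
  exact LinearMap.bijective_of_linearIndependent_of_span_eq_top
    (f := (AlgHom.liftEquiv k L Q _ f).toLinearMap) (b.baseChange L).span_eq hli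
    (hli.span_eq_top_of_card_eq_finrank (by simp [Module.finrank_matrix]))

end Splitting

section DiffQuaternionPair

/-- The elements `U` and `V` of the differential `k`-algebra `(A, D)` satisfy the defining
relations of the generators of the quaternion algebra `(α, β)` with the derivation
`d_{(u,v)} + ∂_{au}`. Here `α′ / (2α)` is written `logDeriv α / 2`, and the values of `∂_{au}` at
`u` and `v` are `0` and `-2auv`. -/
structure IsDiffQuaternionPair {k A : Type*} [Field k] [Differential k] [Ring A] [Algebra k A]
    (α β a : k) (D : A → A) (U V : A) : Prop where
  left_mul_self : U * U = algebraMap k A α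
  right_mul_self : V * V = algebraMap k A β
  right_mul_left : V * U = -(U * V)
  deriv_left : D U = (logDeriv α / 2) • U
  deriv_right : D V = (logDeriv β / 2) • V - (2 * a) • (U * V)

/-- The coordinate-wise derivation on matrices over a differential ring. -/
abbrev matrixDeriv {n A : Type*} [CommRing A] [Differential A] (X : Matrix n n A) : Matrix n n A :=
  X.map (·′)

theorem isRingDeriv_matrixDeriv (n A : Type*) [Fintype n] [DecidableEq n] [CommRing A]
    [Differential A] : IsRingDeriv (matrixDeriv : Matrix n n A → Matrix n n A) :=
  (isRingDeriv_deriv A).matrix_map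

namespace IsDiffQuaternionPair

section Ring

variable {k A B : Type*} [Field k] [Differential k] [Ring A] [Algebra k A] [Ring B] [Algebra k B]
  {α β a : k} {d : A → A} {D : B → B} {u v : A}

theorem of_eq_add_commutator (hu : u * u = algebraMap k A α) (hv : v * v = algebraMap k A β)
    (huv : v * u = -(u * v)) {w : A} (hw : w = algebraMap k A a * u)
    (hdu : d u = algebraMap k A (α′ / (2 * α)) * u + (u * w - w * u))
    (hdv : d v = algebraMap k A (β′ / (2 * β)) * v + (v * w - w * v)) :
    IsDiffQuaternionPair α β a d u v where
  left_mul_self := hu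
  right_mul_self := hv
  right_mul_left := huv
  deriv_left := by
    rw [hdu, hw, ← Algebra.smul_def, ← Algebra.smul_def, mul_smul_comm, smul_mul_assoc, sub_self,
      add_zero, mul_comm, div_mul_eq_div_div]
    rfl
  deriv_right := by
    rw [hdv, hw, ← Algebra.smul_def, ← Algebra.smul_def, mul_smul_comm, smul_mul_assoc, huv,
      mul_comm 2 β, div_mul_eq_div_div, Differential.logDeriv]
    module

theorem map (h : IsDiffQuaternionPair α β a d u v) (f : A →ₐ[k] B)
    (hf : ∀ x, f (d x) = D (f x)) : IsDiffQuaternionPair α β a D (f u) (f v) where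
  left_mul_self := by rw [← map_mul, h.left_mul_self, f.commutes]
  right_mul_self := by rw [← map_mul, h.right_mul_self, f.commutes]
  right_mul_left := by rw [← map_mul, h.right_mul_left, map_neg, map_mul]
  deriv_left := by rw [← hf, h.deriv_left, map_smul]
  deriv_right := by rw [← hf, h.deriv_right, map_sub, map_smul, map_smul, map_mul]

theorem isUnit_left (h : IsDiffQuaternionPair α β a d u v) (hα : α ≠ 0) : IsUnit u :=
  isUnit_of_mul_self_eq_algebraMap hα h.left_mul_self

theorem isUnit_right (h : IsDiffQuaternionPair α β a d u v) (hβ : β ≠ 0) : IsUnit v :=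
  isUnit_of_mul_self_eq_algebraMap hβ h.right_mul_self

theorem exists_algHom (h : IsDiffQuaternionPair α β a d u v) (hd : IsRingDeriv d)
    (hdk : RestrictsTo (·′ : k → k) d) (b : Module.Basis (Fin 4) k A) (hb : ⇑b = ![1, u, v, u * v])
    (hD : IsRingDeriv D) (hDk : RestrictsTo (·′ : k → k) D) {U V : B}
    (hUV : IsDiffQuaternionPair α β a D U V) : ∃ f : A →ₐ[k] B, ∀ x, f (d x) = D (f x) := by
  obtain ⟨f, rfl, rfl⟩ := exists_algHom_of_anticommute h.left_mul_self h.right_mul_self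
    h.right_mul_left b hb hUV.left_mul_self hUV.right_mul_self hUV.right_mul_left
  refine ⟨f, hd.algHom_deriv_of_adjoin_eq_top hD hdk hDk (adjoin_pair_eq_top_of_basis b hb) f ?_⟩
  rintro x (rfl | rfl)
  · rw [h.deriv_left, hUV.deriv_left, map_smul]
  · rw [h.deriv_right, hUV.deriv_right, map_sub, map_smul, map_smul, map_mul]

theorem diffSplits_iff {L : Type*} [Field L] [Differential L] [Algebra k L]
    [DifferentialAlgebra k L] [NeZero (2 : k)] (h : IsDiffQuaternionPair α β a d u v) (hα : α ≠ 0)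
    (hβ : β ≠ 0) (hd : IsRingDeriv d) (hdk : RestrictsTo (·′ : k → k) d)
    (b : Module.Basis (Fin 4) k A) (hb : ⇑b = ![1, u, v, u * v]) :
    DiffSplits k A d L (·′) ↔
      ∃ U V : Matrix (Fin 2) (Fin 2) L, IsDiffQuaternionPair α β a matrixDeriv U V := by
  have hδL := isRingDeriv_deriv L
  refine ⟨fun hsplit ↦ ?_, fun ⟨U, V, hUV⟩ ↦ ?_⟩
  · obtain ⟨f, hf⟩ := hsplit.exists_algHom hδL
    exact ⟨_, _, h.map f hf⟩
  · have hres : RestrictsTo (·′ : k → k) (·′ : L → L) := deriv_algebraMap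
    obtain ⟨f, hf⟩ := h.exists_algHom hd hdk b hb (isRingDeriv_matrixDeriv (Fin 2) L)
      (hres.matrix_map hδL) hUV
    have : NeZero (2 : L) := map_ofNat (algebraMap k L) 2 ▸ .of_injective (algebraMap k L).injective
    exact .of_algHom hδL f hf <| bijective_liftEquiv_of_anticommute hα hβ h.left_mul_self
      h.right_mul_self h.right_mul_left b hb f

end Ring

section Matrix

variable {k L n : Type*} [Field k] [Differential k] [Field L] [Differential L] [Algebra k L]
  [Fintype n] [DecidableEq n] {α β a : k} {U V : Matrix n n L}

theorem map_mapMatrix {M : Type*} [Field M] [Differential M] [Algebra k M]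
    (h : IsDiffQuaternionPair α β a matrixDeriv U V) (j : L →ₐ[k] M) (hj : ∀ x, (j x)′ = j x′) :
    IsDiffQuaternionPair α β a matrixDeriv (j.mapMatrix U) (j.mapMatrix V) :=
  h.map j.mapMatrix fun X ↦ by
    ext
    simp [hj]

theorem smul_one_add_left_ne_zero [NeZero (2 : L)] [Nonempty n]
    (h : IsDiffQuaternionPair α β a matrixDeriv U V) (hα : α ≠ 0) (hβ : β ≠ 0) (z : L) :
    z • (1 : Matrix n n L) + U ≠ 0 := fun h0 ↦
  have hli := linearIndependent_one_of_anticommute (K := L) (h.isUnit_left hα) (h.isUnit_right hβ)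
    h.right_mul_left
  one_ne_zero (hli.eq_zero_of_pair ((one_smul L U).symm ▸ h0)).2

theorem smul_one_add_left_mul_left (h : IsDiffQuaternionPair α β a matrixDeriv U V) {z : L}
    (hz : z ^ 2 = algebraMap k L α) :
    (z • (1 : Matrix n n L) + U) * U = z • (z • (1 : Matrix n n L) + U) := by
  rw [add_mul, h.left_mul_self, smul_mul_assoc, one_mul, smul_add, smul_smul, ← sq, hz,
    algebraMap_smul, Algebra.algebraMap_eq_smul_one, add_comm]

theorem deriv_smul_one_add_left [NeZero (2 : L)] [DifferentialAlgebra k L]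
    (h : IsDiffQuaternionPair α β a matrixDeriv U V) {z : L} (hz : z ^ 2 = algebraMap k L α) :
    matrixDeriv (z • (1 : Matrix n n L) + U) =
      (logDeriv α / 2) • (z • (1 : Matrix n n L) + U) := by
  rw [(isRingDeriv_matrixDeriv n L).map_add, h.deriv_left, smul_add]
  congr 1
  ext i j
  by_cases hij : i = j <;> simp [hij, deriv_of_sq_eq_algebraMap hz]

theorem deriv_smul_one_add_left_mul_right [NeZero (2 : L)] [DifferentialAlgebra k L]
    (h : IsDiffQuaternionPair α β a matrixDeriv U V) {z : L} (hz : z ^ 2 = algebraMap k L α) :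
    matrixDeriv ((z • (1 : Matrix n n L) + U) * V) =
      (algebraMap k L ((logDeriv α + logDeriv β) / 2) - 2 * algebraMap k L a * z) •
        ((z • (1 : Matrix n n L) + U) * V) := by
  set E := z • (1 : Matrix n n L) + U
  have hEUV : E * (U * V) = z • (E * V) := by
    rw [← mul_assoc, h.smul_one_add_left_mul_left hz, smul_mul_assoc]
  rw [(isRingDeriv_matrixDeriv n L).leibniz, h.deriv_smul_one_add_left hz, h.deriv_right, mul_sub,
    mul_smul_comm, mul_smul_comm, smul_mul_assoc, hEUV]
  simp only [← algebraMap_smul L (_ : k) (_ : Matrix n n L), map_mul, map_add, map_div₀, map_ofNat]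
  module

theorem exists_logDeriv_eq [NeZero (2 : L)] [Nonempty n] [DifferentialAlgebra k L]
    (h : IsDiffQuaternionPair α β a matrixDeriv U V) (hα : α ≠ 0) (hβ : β ≠ 0) {z : L}
    (hz : z ^ 2 = algebraMap k L α) :
    ∃ y : L, y ≠ 0 ∧ logDeriv y = 4 * (algebraMap k L a * z) := by
  set X := (z • (1 : Matrix n n L) + U) * V
  have hX : X ≠ 0 := fun hX ↦ h.smul_one_add_left_ne_zero hα hβ z <|
    (h.isUnit_right hβ).mul_left_eq_zero.1 hX
  obtain ⟨i, j, hx⟩ : ∃ i j, X i j ≠ 0 := by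
    contrapose! hX
    exact Matrix.ext hX
  have hlog : logDeriv (X i j) =
      algebraMap k L ((logDeriv α + logDeriv β) / 2) - 2 * algebraMap k L a * z :=
    (div_eq_iff hx).2 (congr_fun₂ (h.deriv_smul_one_add_left_mul_right hz) i j)
  have hαβ : algebraMap k L (α * β) ≠ 0 := by simp [hα, hβ]
  refine ⟨algebraMap k L (α * β) / X i j ^ 2, div_ne_zero hαβ (pow_ne_zero 2 hx), ?_⟩
  rw [Differential.logDeriv_div _ _ hαβ (pow_ne_zero 2 hx), Differential.logDeriv_pow, hlog,
    logDeriv_algebraMap, Differential.logDeriv_mul _ _ hα hβ]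
  have h2 := two_ne_zero' L
  simp only [map_add, map_div₀, map_ofNat, Nat.cast_ofNat]
  field_simp
  ring

theorem of_logDeriv_eq [NeZero (2 : L)] [DifferentialAlgebra k L] {z g y : L}
    (hz : z ^ 2 = algebraMap k L α) (hg : g ^ 2 = algebraMap k L β) (hy : y ≠ 0)
    (hlog : logDeriv y = algebraMap k L a * z) :
    IsDiffQuaternionPair α β a matrixDeriv !![z, 0; 0, -z] !![0, g / y ^ 2; g * y ^ 2, 0] := by
  have hg' := deriv_of_sq_eq_algebraMap hg
  have hy' : y′ = algebraMap k L a * z * y := by rw [deriv_eq_logDeriv_mul, hlog]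
  have hdiv : (g / y ^ 2)′ = (logDeriv β / 2) • (g / y ^ 2) - (2 * a) • (z * (g / y ^ 2)) := by
    simp only [Derivation.leibniz_div, Derivation.leibniz_pow, hg', hy', smul_eq_mul, nsmul_eq_mul,
      Algebra.smul_def (R := k), map_mul, map_ofNat, Nat.cast_ofNat]
    field_simp
    ring
  have hmul : (g * y ^ 2)′ = (logDeriv β / 2) • (g * y ^ 2) + (2 * a) • (z * (g * y ^ 2)) := by
    simp only [Derivation.leibniz, Derivation.leibniz_pow, hg', hy', smul_eq_mul, nsmul_eq_mul,
      Algebra.smul_def (R := k), map_mul, map_ofNat, Nat.cast_ofNat]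
    ring
  constructor
  · ext i j
    fin_cases i <;> fin_cases j <;> simp [Matrix.algebraMap_matrix_apply, ← hz, sq z]
  · ext i j
    fin_cases i <;> fin_cases j <;> simp [Matrix.algebraMap_matrix_apply, ← hg] <;> field_simp
  · simp [mul_comm]
  · ext i j
    fin_cases i <;> fin_cases j <;> simp [deriv_of_sq_eq_algebraMap hz]
  · ext i j
    fin_cases i <;> fin_cases j <;> simp [hdiv, hmul]

end Matrix

end IsDiffQuaternionPair

end DiffQuaternionPair

section Descent

variable {k K : Type u} [Field k] [Differential k] [CharZero k] [Field K] [Differential K]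
  [Algebra k K] [DifferentialAlgebra k K] [FiniteDimensional k K] {α β a : k} {ξ : K}

theorem IsDiffQuaternionPair.exists_logDeriv_eq_natCast_mul {L : Type u} [Field L] [Differential L]
    [Algebra k L] [DifferentialAlgebra k L] [FiniteDimensional k L] {ι : Type*} [Fintype ι]
    [DecidableEq ι] [Nonempty ι] {U V : Matrix ι ι L}
    (h : IsDiffQuaternionPair α β a matrixDeriv U V) (hα : α ≠ 0) (hβ : β ≠ 0)
    (hξ : ξ ^ 2 = algebraMap k K α) :
    ∃ n : ℕ, n ≠ 0 ∧ ∃ θ : K, θ ≠ 0 ∧ logDeriv θ = n * (algebraMap k K a * ξ) := by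
  obtain ⟨M, _, _, _, ⟨i⟩, ⟨j⟩⟩ := exists_common_finite_extension k K L
  let := differentialFiniteDimensional k M
  have := differentialAlgebraFiniteDimensional (F := k) (K := M)
  have := charZero_of_injective_algebraMap (algebraMap k M).injective
  let := i.toRingHom.toAlgebra
  have : IsScalarTower k K M := .of_algHom i
  have : DifferentialAlgebra K M := ⟨fun x ↦ (algHom_deriv' i i.injective x).symm⟩
  have hUV := h.map_mapMatrix j fun x ↦ (algHom_deriv' j j.injective x).symm
  obtain ⟨y, hy, hlog⟩ := hUV.exists_logDeriv_eq hα hβ (z := algebraMap K M ξ) <| by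
    rw [← map_pow, hξ, ← IsScalarTower.algebraMap_apply]
  have hfin : FiniteDimensional K M := .right k K M
  obtain ⟨m, hm, θ, hθ, hlogθ⟩ := exists_logDeriv_eq_natCast_mul_of_isIntegral (K := K) hy
    (Algebra.IsIntegral.isIntegral y) (c := 4 * (algebraMap k K a * ξ)) <| by
      rw [hlog, map_mul, map_mul, map_ofNat, ← IsScalarTower.algebraMap_apply]
  exact ⟨m * 4, by positivity, θ, hθ, by rw [hlogθ, Nat.cast_mul, Nat.cast_ofNat, mul_assoc]⟩

theorem exists_isDiffQuaternionPair_of_logDeriv_eq_natCast_mul (β : k)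
    (hξ : ξ ^ 2 = algebraMap k K α) {n : ℕ} (hn : n ≠ 0) {θ : K} (hθ : θ ≠ 0)
    (hlog : logDeriv θ = n * (algebraMap k K a * ξ)) :
    ∃ (L : Type u) (_ : Field L) (_ : Algebra k L) (_ : Differential L),
      DifferentialAlgebra k L ∧ FiniteDimensional k L ∧
      ∃ U V : Matrix (Fin 2) (Fin 2) L, IsDiffQuaternionPair α β a matrixDeriv U V := by
  obtain ⟨L, _, _, _, η, γ, hη, hγ⟩ :=
    exists_finite_extension_pow_eq K θ (algebraMap k K β) hn two_ne_zero
  have : CharZero K := charZero_of_injective_algebraMap (algebraMap k K).injective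
  have : CharZero L := charZero_of_injective_algebraMap (algebraMap K L).injective
  let := differentialFiniteDimensional K L
  have := differentialAlgebraFiniteDimensional (F := K) (K := L)
  let : Algebra k L := ((algebraMap K L).comp (algebraMap k K)).toAlgebra
  have : IsScalarTower k K L := .of_algebraMap_eq fun _ ↦ rfl
  have hn' : (n : L) ≠ 0 := Nat.cast_ne_zero.2 hn
  have hη0 : η ≠ 0 := fun h ↦ hθ <| by simpa [h, hn] using hη.symm
  have hlogη : logDeriv η = algebraMap k L a * algebraMap K L ξ := by
    rw [logDeriv_of_pow_eq_algebraMap hn' hη, hlog, map_mul, map_natCast,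
      mul_div_cancel_left₀ _ hn', map_mul, ← IsScalarTower.algebraMap_apply]
  have hξL : algebraMap K L ξ ^ 2 = algebraMap k L α := by
    rw [← map_pow, hξ, ← IsScalarTower.algebraMap_apply]
  have : DifferentialAlgebra k L :=
    ⟨fun _ ↦ by simp only [IsScalarTower.algebraMap_apply k K L, deriv_algebraMap]⟩
  exact ⟨L, _, _, _, this, .trans k K L, _, _, .of_logDeriv_eq hξL hγ hη0 hlogη⟩

end Descent

/-- For `d = d_{(u,v)} + ∂_{au}` on `Q = (α, β)_k`, the algebra
`(Q, d)` is split by a finite differential field extension of `(k, ′)` if and only if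
`a = θ′/(nξθ)` for some `n ≥ 1` and some nonzero `θ ∈ k(ξ)`, where `ξ² = α`. -/
theorem stmt_13 (k : Type u) [Field k] [CharZero k]
    (δk : k → k) (hδk : IsRingDeriv δk)
    (α β : k) (hα : α ≠ 0) (hβ : β ≠ 0)
    (Q : Type u) [Ring Q] [Algebra k Q]
    (u v : Q) (hu : u * u = algebraMap k Q α) (hv : v * v = algebraMap k Q β)
    (huv : v * u = -(u * v))
    (bQ : Module.Basis (Fin 4) k Q) (hbQ : ⇑bQ = ![1, u, v, u * v])
    (a : k) (w : Q) (hw : w = algebraMap k Q a * u)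
    (d : Q → Q) (hd : IsRingDeriv d) (hdk : RestrictsTo δk d)
    (hdu : d u = algebraMap k Q (δk α / (2 * α)) * u + (u * w - w * u))
    (hdv : d v = algebraMap k Q (δk β / (2 * β)) * v + (v * w - w * v))
    (kξ : Type u) [Field kξ] [Algebra k kξ]
    (ξ : kξ) (hξ : ξ ^ 2 = algebraMap k kξ α)
    (hgen : IntermediateField.adjoin k {ξ} = ⊤)
    (δξ : kξ → kξ) (hδξ : IsRingDeriv δξ) (hresξ : RestrictsTo δk δξ) :
    (∃ (L : Type u) (_ : Field L) (_ : Algebra k L) (δL : L → L),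
        IsRingDeriv δL ∧ RestrictsTo δk δL ∧ FiniteDimensional k L ∧
        DiffSplits k Q d L δL) ↔
    (∃ n : ℕ, 1 ≤ n ∧ ∃ θ : kξ, θ ≠ 0 ∧
        algebraMap k kξ a = δξ θ / ((n : kξ) * ξ * θ)) := by
  have hξ0 : ξ ≠ 0 := fun h ↦ hα <| by simpa [h] using hξ.symm
  have hint : IsIntegral k ξ := .of_pow two_pos (hξ ▸ isIntegral_algebraMap)
  have := finiteDimensional_of_adjoin_simple_eq_top hint hgen
  have : CharZero kξ := charZero_of_injective_algebraMap (algebraMap k kξ).injective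
  let := hδk.toDifferential
  let := hδξ.toDifferential
  have : DifferentialAlgebra k kξ := ⟨hresξ⟩
  have hpair : IsDiffQuaternionPair α β a d u v := .of_eq_add_commutator hu hv huv hw hdu hdv
  constructor
  · rintro ⟨L, _, _, δL, hδL, hresL, _, hsplit⟩
    let := hδL.toDifferential
    have : DifferentialAlgebra k L := ⟨hresL⟩
    obtain ⟨U, V, hUV⟩ := (hpair.diffSplits_iff hα hβ hd hdk bQ hbQ).1 hsplit
    obtain ⟨n, hn, θ, hθ, hlog⟩ := hUV.exists_logDeriv_eq_natCast_mul hα hβ hξ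
    exact ⟨n, Nat.pos_of_ne_zero hn, θ, hθ,
      (logDeriv_eq_mul_mul_iff (Nat.cast_ne_zero.2 hn) hξ0 hθ).1 hlog⟩
  · rintro ⟨n, hn, θ, hθ, heq⟩
    have hn0 : n ≠ 0 := Nat.ne_of_gt hn
    obtain ⟨L, _, _, _, _, hfin, hUV⟩ :=
      exists_isDiffQuaternionPair_of_logDeriv_eq_natCast_mul β hξ hn0 hθ
        ((logDeriv_eq_mul_mul_iff (Nat.cast_ne_zero.2 hn0) hξ0 hθ).2 heq)
    exact ⟨L, _, _, _, isRingDeriv_deriv L, deriv_algebraMap, hfin,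
      (hpair.diffSplits_iff hα hβ hd hdk bQ hbQ).2 hUV⟩
end

section
/- Let (k,′) be a differential field of characteristic zero and α ∈ kˣ a non-square, and let ξ satisfy ξ² = α, so that k(ξ)/k is a quadratic extension carrying the unique extension of ′. For every nonzero θ ∈ k(ξ): θ′/θ lies in ξ·k if and only if the norm N_{k(ξ)/k}(θ) = θ·θ̄ is a constant, i.e., (N_{k(ξ)/k}(θ))′ = 0, where θ̄ denotes the image of θ under the nontrivial k-automorphism of k(ξ). -/
open scoped TensorProduct

/-!
Since `k(ξ)/k` is separable, every `k`-embedding commutes with the derivation, so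
`N(θ)′ / N(θ) = θ′/θ + σ(θ′/θ)` for the conjugation `σ`. Hence the norm of `θ` is constant exactly
when `σ` negates `θ′/θ`, and the elements `a + bξ` negated by `σ` are those with `2a = 0`.
-/

open scoped Differential IntermediateField

/-- The Mathlib differential ring structure given by an unbundled derivation `d`. -/
@[reducible]
def IsRingDeriv.toDifferential_s14 {A : Type*} [CommRing A] {d : A → A} (hd : IsRingDeriv d) :
    Differential A where
  deriv := Derivation.mk' (AddMonoidHom.mk' d hd.map_add).toIntLinearMap fun x y ↦ by
    simp only [AddMonoidHom.coe_toIntLinearMap, AddMonoidHom.mk'_apply, hd.leibniz, smul_eq_mul]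
    ring

theorem exists_eq_add_mul_of_mem_adjoin_of_sq_eq {R A : Type*} [CommSemiring R] [CommSemiring A]
    [Algebra R A] {a : R} {ξ x : A} (hξ : ξ ^ 2 = algebraMap R A a)
    (hx : x ∈ Algebra.adjoin R {ξ}) :
    ∃ b c : R, x = algebraMap R A b + ξ * algebraMap R A c := by
  induction hx using Algebra.adjoin_induction with
  | mem x hx => exact ⟨0, 1, by simpa using hx⟩
  | algebraMap r => exact ⟨r, 0, by simp⟩
  | add x y _ _ hx hy =>
    obtain ⟨b, c, rfl⟩ := hx
    obtain ⟨d, e, rfl⟩ := hy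
    exact ⟨b + d, c + e, by simp only [map_add]; ring⟩
  | mul x y _ _ hx hy =>
    obtain ⟨b, c, rfl⟩ := hx
    obtain ⟨d, e, rfl⟩ := hy
    refine ⟨b * d + a * (c * e), b * e + c * d, ?_⟩
    simp only [map_add, map_mul, ← hξ]
    ring

theorem algHom_apply_eq_neg_iff_of_sq_eq {R A : Type*} [CommRing R] [CommRing A]
    [NoZeroDivisors A] [Algebra R A] (h2 : (2 : A) ≠ 0) {a : R} {ξ x : A}
    (hξ : ξ ^ 2 = algebraMap R A a) (hx : x ∈ Algebra.adjoin R {ξ})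
    {σ : A →ₐ[R] A} (hσ : σ ξ = -ξ) :
    σ x = -x ↔ ∃ c : R, x = ξ * algebraMap R A c := by
  constructor
  · intro hneg
    obtain ⟨b, c, rfl⟩ := exists_eq_add_mul_of_mem_adjoin_of_sq_eq hξ hx
    simp only [map_add, map_mul, AlgHom.commutes, hσ] at hneg
    have hb : 2 * algebraMap R A b = 0 := by linear_combination hneg
    exact ⟨c, by rw [(mul_eq_zero.mp hb).resolve_left h2, zero_add]⟩
  · rintro ⟨c, rfl⟩
    rw [map_mul, hσ, AlgHom.commutes, neg_mul]

theorem isSeparable_of_pow_eq_algebraMap {F K : Type*} [Field F] [Field K] [Algebra F K] {n : ℕ}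
    (hn : (n : F) ≠ 0) {a : F} (ha : a ≠ 0) {x : K} (hx : x ^ n = algebraMap F K a) :
    IsSeparable F x :=
  (Polynomial.separable_X_pow_sub_C a hn ha).of_dvd <| minpoly.dvd F x (by simp [hx])

theorem algebra_isSeparable_of_adjoin_eq_top {F K : Type*} [Field F] [Field K] [Algebra F K]
    {S : Set K} (hS : ∀ x ∈ S, IsSeparable F x) (hgen : IntermediateField.adjoin F S = ⊤) :
    Algebra.IsSeparable F K := by
  rw [← separableClosure.eq_top_iff, ← top_le_iff, ← hgen, IntermediateField.adjoin_le_iff]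
  exact fun x hx ↦ mem_separableClosure_iff.mpr (hS x hx)

section LogDeriv

variable {F K L : Type*} [Field F] [Field K] [Field L] [Differential F] [Differential K]
  [Differential L] [Algebra F K] [Algebra F L] [DifferentialAlgebra F K] [DifferentialAlgebra F L]
  [Algebra.IsSeparable F K]

theorem logDeriv_algHom (σ : K →ₐ[F] L) (x : K) :
    Differential.logDeriv (σ x) = σ (Differential.logDeriv x) := by
  rw [Differential.logDeriv, Differential.logDeriv, map_div₀,
    Differential.algHom_deriv' σ σ.injective]

theorem deriv_mul_algHom_eq_zero_iff (σ : K →ₐ[F] K) {θ : K} (hθ : θ ≠ 0) :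
    (θ * σ θ)′ = 0 ↔ σ (Differential.logDeriv θ) = -Differential.logDeriv θ := by
  rw [← Differential.logDeriv_eq_zero, Differential.logDeriv_mul _ _ hθ ((map_ne_zero σ).mpr hθ),
    logDeriv_algHom, add_comm, add_eq_zero_iff_eq_neg]

end LogDeriv

theorem stmt_14_general {k K : Type*} [Field k] [Field K] [Differential k] [Differential K]
    [Algebra k K] [DifferentialAlgebra k K] (h2 : (2 : k) ≠ 0) {α : k} (hα : α ≠ 0) {ξ : K}
    (hξ : ξ ^ 2 = algebraMap k K α) (hgen : k⟮ξ⟯ = ⊤) {σ : K →ₐ[k] K} (hσ : σ ξ = -ξ)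
    {θ : K} (hθ : θ ≠ 0) :
    (∃ c : k, Differential.logDeriv θ = ξ * algebraMap k K c) ↔ (θ * σ θ)′ = 0 := by
  have hsep : IsSeparable k ξ := isSeparable_of_pow_eq_algebraMap (by exact_mod_cast h2) hα hξ
  have : Algebra.IsSeparable k K := algebra_isSeparable_of_adjoin_eq_top (by simpa using hsep) hgen
  have hadjoin : Algebra.adjoin k {ξ} = ⊤ := IntermediateField.adjoin_eq_top_iff.mp hgen
  have h2K : (2 : K) ≠ 0 := map_ofNat (algebraMap k K) 2 ▸ (map_ne_zero _).mpr h2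
  rw [deriv_mul_algHom_eq_zero_iff σ hθ,
    algHom_apply_eq_neg_iff_of_sq_eq h2K hξ (hadjoin ▸ Algebra.mem_top) hσ]

/-- Let `α ∈ kˣ` be a non-square and `k(ξ)/k` the quadratic extension
with `ξ² = α`, with its unique extended derivation. For nonzero `θ ∈ k(ξ)`, the
logarithmic derivative `θ′/θ` lies in `ξ·k` if and only if the norm `θ·θ̄` is a
constant, where `θ̄` is the image of `θ` under the nontrivial `k`-automorphism. -/
theorem stmt_14 (k : Type*) [Field k] [CharZero k]
    (δk : k → k) (hδk : IsRingDeriv δk)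
    (α : k) (hα : α ≠ 0) (hns : ∀ c : k, c ^ 2 ≠ α)
    (kξ : Type*) [Field kξ] [Algebra k kξ]
    (ξ : kξ) (hξ : ξ ^ 2 = algebraMap k kξ α)
    (hgen : IntermediateField.adjoin k {ξ} = ⊤)
    (δξ : kξ → kξ) (hδξ : IsRingDeriv δξ) (hres : RestrictsTo δk δξ)
    (conj : kξ ≃ₐ[k] kξ) (hconj : conj ξ = -ξ)
    (θ : kξ) (hθ : θ ≠ 0) :
    (∃ c : k, δξ θ / θ = ξ * algebraMap k kξ c) ↔ δξ (θ * conj θ) = 0 := by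
  let := hδk.toDifferential_s14
  let := hδξ.toDifferential_s14
  have : DifferentialAlgebra k kξ := ⟨hres⟩
  exact stmt_14_general two_ne_zero hα hξ hgen (σ := conj.toAlgHom) hconj hθ
end

section
/- Let k = ℚ(t) with the derivation t′ = 1, let Q = (1,t)_k be the quaternion algebra with generators u, v satisfying u² = 1, v² = t, vu = −uv, and let d = d_{(u,v)} + ∂_{−(1/(8t))u}. Then every trace-zero element w ∈ Q (i.e., w in the k-span of u, v, uv) with w² ≠ 0 and d(w) ∈ k·w lies in k·u. Consequently, d is not a standard derivation on Q. -/
open scoped TensorProduct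

/-!
With `u² = 1`, `v² = β` and `d = d_{(u,v)} + ∂_{-g u}` we have `d u = 0` and `d v = h v + 2 g u v`
for `h = β′ / (2 β)`. Hence the trace-zero part of `Q` has a basis of eigenvectors `u`, `v + u v`,
`v - u v` of `d`, with eigenvalues `0`, `h + 2 g`, `h - 2 g`. Two nonzero coordinates of another
eigenvector would have a quotient whose logarithmic derivative is a difference of these eigenvalues.
If `4 g` is not a logarithmic derivative, then neither is any of the differences, so every
eigenvector is a multiple of `u`, `v + u v` or `v - u v`; the last two have square zero. Over `ℚ(t)`
with `β = t` and `g = 1 / (8 t)` one has `4 g = (1 / 2) / t`, whereas `c / t` with `c` constant is a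
logarithmic derivative only for integral `c`, as comparing leading coefficients shows.
-/

section LogarithmicDerivative

variable {R k : Type*} [CommRing R] [Field k] [Algebra R k]

/-- The additive group of logarithmic derivatives `f′ / f` of nonzero elements `f` of a differential
field. -/
def logDerivs (δ : Derivation R k k) : AddSubgroup k where
  carrier := {g | ∃ f, f ≠ 0 ∧ δ f = g * f}
  zero_mem' := ⟨1, one_ne_zero, by simp⟩
  add_mem' := by
    rintro g₁ g₂ ⟨f₁, hf₁, h₁⟩ ⟨f₂, hf₂, h₂⟩
    refine ⟨f₁ * f₂, mul_ne_zero hf₁ hf₂, ?_⟩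
    rw [δ.leibniz, h₁, h₂, smul_eq_mul, smul_eq_mul]
    ring
  neg_mem' := by
    rintro g ⟨f, hf, h⟩
    refine ⟨f⁻¹, inv_ne_zero hf, ?_⟩
    rw [δ.leibniz_inv, h, smul_eq_mul]
    field_simp

theorem div_mem_logDerivs (δ : Derivation R k k) {f : k} (hf : f ≠ 0) : δ f / f ∈ logDerivs δ :=
  ⟨f, hf, (div_mul_cancel₀ _ hf).symm⟩

theorem two_ne_zero_of_four_mul_notMem_logDerivs {δ : Derivation R k k} {g : k}
    (hg : 4 * g ∉ logDerivs δ) : (2 : k) ≠ 0 := fun h2 ↦ hg <| by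
  rw [show (4 : k) = 2 * 2 by norm_num, h2, zero_mul, zero_mul]
  exact zero_mem _

/-- The eigenvalues of `d_{(u,v)} + ∂_{-g u}` on `eigenvectors u v`, where `u² = 1` and `v² = β`. -/
def eigenvalues (δ : Derivation R k k) (β g : k) : Fin 3 → k :=
  ![0, δ β / (2 * β) + 2 * g, δ β / (2 * β) - 2 * g]

theorem pairwise_eigenvalues_sub_notMem_logDerivs {δ : Derivation R k k} {β g : k} (hβ : β ≠ 0)
    (hg : 4 * g ∉ logDerivs δ) :
    Pairwise fun i j ↦ eigenvalues δ β g i - eigenvalues δ β g j ∉ logDerivs δ := by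
  have h2 := two_ne_zero_of_four_mul_notMem_logDerivs hg
  unfold eigenvalues
  have two_h_mem : δ β / (2 * β) + δ β / (2 * β) ∈ logDerivs δ := by
    convert! div_mem_logDerivs δ hβ using 1
    field
  generalize δ β / (2 * β) = h at two_h_mem ⊢
  have h_add : h + 2 * g ∉ logDerivs δ := fun hmem ↦ hg <| by
    have := sub_mem (add_mem hmem hmem) two_h_mem
    ring_nf at this ⊢
    exact this
  have h_sub : h - 2 * g ∉ logDerivs δ := fun hmem ↦ hg <| by
    have := sub_mem two_h_mem (add_mem hmem hmem)
    ring_nf at this ⊢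
    exact this
  have h_diff : h + 2 * g - (h - 2 * g) ∉ logDerivs δ := by
    rwa [show h + 2 * g - (h - 2 * g) = 4 * g by ring]
  rw [← sub_zero (h + 2 * g)] at h_add
  rw [← sub_zero (h - 2 * g)] at h_sub
  intro i j hij
  wlog hlt : j < i generalizing i j
  · exact sub_mem_comm_iff.not.1 (this hij.symm (hij.lt_or_gt.resolve_right hlt))
  fin_cases i <;> fin_cases j <;> first | exact absurd hlt (by decide) | skip
  exacts [h_add, h_sub, sub_mem_comm_iff.not.1 h_diff]

end LogarithmicDerivative

section Eigenvector

variable {k M ι : Type*} [AddCommGroup M] {D : M →+ M} {e : ι → M} {r : ι → k}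

theorem apply_sum_smul_of_eigenvectors [CommRing k] [Module k M] {δ : k → k}
    (hD : ∀ (c : k) (x : M), D (c • x) = δ c • x + c • D x)
    (he : ∀ i, D (e i) = r i • e i) (s : Finset ι) (a : ι → k) :
    D (∑ i ∈ s, a i • e i) = ∑ i ∈ s, (δ (a i) + a i * r i) • e i := by
  rw [map_sum]
  exact Finset.sum_congr rfl fun i _ ↦ by rw [hD, he, add_smul, mul_smul]

theorem apply_mem_span_of_eigenvectors [CommRing k] [Module k M] {δ : k → k}
    (hD : ∀ (c : k) (x : M), D (c • x) = δ c • x + c • D x)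
    (he : ∀ i, D (e i) = r i • e i) {w : M} (hw : w ∈ Submodule.span k (Set.range e)) :
    D w ∈ Submodule.span k (Set.range e) := by
  obtain ⟨a, rfl⟩ := Finsupp.mem_span_range_iff_exists_finsupp.1 hw
  rw [Finsupp.sum, apply_sum_smul_of_eigenvectors hD he]
  exact Submodule.sum_smul_mem _ _ fun i _ ↦ Submodule.subset_span (Set.mem_range_self i)

theorem exists_eq_smul_of_eigenvector {R : Type*} [CommRing R] [Field k] [Algebra R k] [Module k M]
    {δ : Derivation R k k} (hD : ∀ (c : k) (x : M), D (c • x) = δ c • x + c • D x)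
    (he : ∀ i, D (e i) = r i • e i) (hli : LinearIndependent k e)
    (hr : Pairwise fun i j ↦ r i - r j ∉ logDerivs δ) {w : M}
    (hw : w ∈ Submodule.span k (Set.range e)) (hw0 : w ≠ 0) {l : k} (hl : D w = l • w) :
    ∃ i, ∃ a : k, w = a • e i := by
  obtain ⟨a, rfl⟩ := Finsupp.mem_span_range_iff_exists_finsupp.1 hw
  have deriv_coord : ∀ i ∈ a.support, δ (a i) + a i * r i - l * a i = 0 := by
    refine linearIndependent_iff'.1 hli a.support (fun i ↦ δ (a i) + a i * r i - l * a i) ?_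
    rw [Finsupp.sum, apply_sum_smul_of_eigenvectors hD he, Finset.smul_sum] at hl
    simp only [sub_smul, Finset.sum_sub_distrib, mul_smul l, hl, sub_self]
  have div_mem : ∀ i ∈ a.support, l - r i ∈ logDerivs δ := fun i hi ↦
    ⟨a i, Finsupp.mem_support_iff.1 hi, by linear_combination deriv_coord i hi⟩
  obtain ⟨i, hi, -⟩ := Finset.exists_ne_zero_of_sum_ne_zero hw0
  refine ⟨i, a i, Finset.sum_eq_single_of_mem i hi fun j hj hji ↦ ?_⟩
  exact absurd (by simpa using sub_mem (div_mem i hi) (div_mem j hj)) (hr hji)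

end Eigenvector

section Span

theorem range_triple {α : Type*} (a b c : α) : Set.range ![a, b, c] = {a, b, c} := by
  simp only [Matrix.range_cons, Matrix.range_empty, Set.union_empty, Set.singleton_union]

variable {k M : Type*} [Field k] [AddCommGroup M] [Module k M]

theorem span_triple_add_sub (h2 : (2 : k) ≠ 0) (x a b : M) :
    Submodule.span k {x, a + b, a - b} = Submodule.span k {x, a, b} := by
  apply le_antisymm <;> rw [Submodule.span_le] <;> rintro y (rfl | rfl | rfl) <;>
    rw [SetLike.mem_coe, Submodule.mem_span_triple]
  · exact ⟨1, 0, 0, by module⟩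
  · exact ⟨0, 1, 1, by module⟩
  · exact ⟨0, 1, -1, by module⟩
  · exact ⟨1, 0, 0, by module⟩
  · exact ⟨0, 2⁻¹, 2⁻¹, by match_scalars <;> field_simp <;> ring⟩
  · exact ⟨0, 2⁻¹, -2⁻¹, by match_scalars <;> field_simp <;> ring⟩

end Span

section RingDerivation

variable {k Q : Type*} [Ring Q] {u v : Q} {d : Q → Q}

theorem sq_add_mul_eq_zero (hu : u * u = 1) (huv : v * u = -(u * v)) :
    (v + u * v) * (v + u * v) = 0 := by
  have hvuv : v * (u * v) = -(u * v * v) := by rw [← mul_assoc, huv, neg_mul]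
  have huvuv : u * v * (u * v) = -(v * v) := by
    rw [mul_assoc, hvuv, mul_neg, ← mul_assoc, ← mul_assoc, hu, one_mul]
  rw [mul_add, add_mul, add_mul, hvuv, huvuv]
  abel

theorem sq_sub_mul_eq_zero (hu : u * u = 1) (huv : v * u = -(u * v)) :
    (v - u * v) * (v - u * v) = 0 := by
  simpa [sub_eq_add_neg] using sq_add_mul_eq_zero (u := -u) (v := v) (by simpa) (by simp [huv])

theorem IsRingDeriv.map_neg (hd : IsRingDeriv d) (x : Q) : d (-x) = -d x :=
  (AddMonoidHom.mk' d hd.map_add).map_neg x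

variable [CommRing k] [Algebra k Q]

theorem apply_smul_of_restrictsTo {δ : k → k} (hd : IsRingDeriv d) (hdk : RestrictsTo δ d)
    (c : k) (x : Q) : d (c • x) = δ c • x + c • d x := by
  rw [Algebra.smul_def, hd.leibniz, hdk, Algebra.smul_def, Algebra.smul_def]

theorem apply_add_mul_of_eigenvector (hd : IsRingDeriv d) (hu : u * u = 1)
    (hdu : d u = 0) {h g : k} (hdv : d v = h • v + g • (u * v)) :
    d (v + u * v) = (h + g) • (v + u * v) := by
  rw [hd.map_add, hd.leibniz, hdu, hdv, zero_mul, zero_add, mul_add, mul_smul_comm, mul_smul_comm,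
    ← mul_assoc, hu, one_mul]
  module

theorem apply_sub_mul_of_eigenvector (hd : IsRingDeriv d) (hu : u * u = 1)
    (hdu : d u = 0) {h g : k} (hdv : d v = h • v + g • (u * v)) :
    d (v - u * v) = (h - g) • (v - u * v) := by
  simpa [sub_eq_add_neg] using
    apply_add_mul_of_eigenvector (u := -u) (v := v) (h := h) (g := -g) hd (by simpa)
      (by rw [hd.map_neg, hdu, neg_zero]) (by simpa)

end RingDerivation

section Quaternion

variable {k Q : Type*} [Field k] [Ring Q] [Algebra k Q] {u v : Q}

theorem eq_zero_of_add_eq_zero_of_mul_mul (h2 : (2 : k) ≠ 0) {γ : k} (hγ : γ ≠ 0) {x y z : Q}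
    (hx : z * x * z = γ • x) (hy : z * y * z = -(γ • y)) (hxy : x + y = 0) :
    x = 0 ∧ y = 0 := by
  obtain rfl : y = -x := (neg_eq_of_add_eq_zero_right hxy).symm
  have two_mul_γ_smul : (2 * γ) • x = 0 := by
    rw [mul_neg, neg_mul, smul_neg, neg_neg, hx] at hy
    rw [mul_smul, two_smul, ← neg_eq_iff_add_eq_zero, hy]
  have hx0 := (smul_eq_zero_iff_right (mul_ne_zero h2 hγ)).1 two_mul_γ_smul
  exact ⟨hx0, by rw [hx0, neg_zero]⟩

theorem linearIndependent_one_pair_of_mul_eq_neg_mul [Nontrivial Q] (h2 : (2 : k) ≠ 0) {α β : k}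
    (hα : α ≠ 0) (hβ : β ≠ 0) (hu : u * u = algebraMap k Q α) (hv : v * v = algebraMap k Q β)
    (huv : v * u = -(u * v)) : LinearIndependent k ![1, u] := by
  have hu' : u * u = α • 1 := by rw [hu, Algebra.algebraMap_eq_smul_one]
  have hv' : v * v = β • 1 := by rw [hv, Algebra.algebraMap_eq_smul_one]
  refine LinearIndependent.pair_iff.2 fun p q h ↦ ?_
  obtain ⟨hp, hq⟩ : p • (1 : Q) = 0 ∧ q • u = 0 := by
    refine eq_zero_of_add_eq_zero_of_mul_mul h2 hβ (z := v) ?_ ?_ h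
    · simp [hv', smul_comm p β]
    · simp [huv, mul_assoc, hv', smul_comm q β]
  have hqα : (q * α) • (1 : Q) = 0 := by rw [mul_smul, ← hu', ← smul_mul_assoc, hq, zero_mul]
  exact ⟨by simpa using hp, by simpa [hα] using hqα⟩

theorem linearIndependent_of_mul_eq_neg_mul [Nontrivial Q] (h2 : (2 : k) ≠ 0) {α β : k}
    (hα : α ≠ 0) (hβ : β ≠ 0) (hu : u * u = algebraMap k Q α) (hv : v * v = algebraMap k Q β)
    (huv : v * u = -(u * v)) : LinearIndependent k ![1, u, v, u * v] := by
  have hu' : u * u = α • 1 := by rw [hu, Algebra.algebraMap_eq_smul_one]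
  have hv' : v * v = β • 1 := by rw [hv, Algebra.algebraMap_eq_smul_one]
  have pair_indep : ∀ p q : k, p • (1 : Q) + q • u = 0 → p = 0 ∧ q = 0 :=
    LinearIndependent.pair_iff.1 (linearIndependent_one_pair_of_mul_eq_neg_mul h2 hα hβ hu hv huv)
  refine Fintype.linearIndependent_iff.2 fun a ha ↦ ?_
  obtain ⟨h01, h23⟩ : a 0 • (1 : Q) + a 1 • u = 0 ∧ (a 2 • (1 : Q) + a 3 • u) * v = 0 := by
    refine eq_zero_of_add_eq_zero_of_mul_mul h2 hα (z := u) ?_ ?_ ?_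
    · simp only [mul_add, add_mul, mul_smul_comm, smul_mul_assoc, mul_one, hu', one_mul, smul_add]
      module
    · simp only [mul_add, add_mul, mul_smul_comm, smul_mul_assoc, mul_assoc, huv, mul_neg, hu',
        one_mul, ← mul_assoc u u]
      module
    · simpa [Fin.sum_univ_four, add_mul, add_assoc] using ha
  have h23' : a 2 • (1 : Q) + a 3 • u = 0 := by
    have := congr($h23 * v)
    rwa [mul_assoc, hv', mul_smul_comm, mul_one, zero_mul, smul_eq_zero_iff_right hβ] at this
  intro i
  fin_cases i
  exacts [(pair_indep _ _ h01).1, (pair_indep _ _ h01).2, (pair_indep _ _ h23').1,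
    (pair_indep _ _ h23').2]

/-- Eigenvectors of `d_{(u,v)} + ∂_{-g u}` spanning the trace-zero quaternions, when `u² = 1`. -/
def eigenvectors {Q : Type*} [Ring Q] (u v : Q) : Fin 3 → Q :=
  ![u, v + u * v, v - u * v]

theorem span_range_eigenvectors (h2 : (2 : k) ≠ 0) (u v : Q) :
    Submodule.span k (Set.range (eigenvectors u v)) = Submodule.span k {u, v, u * v} := by
  rw [eigenvectors, range_triple, span_triple_add_sub h2]

theorem linearIndependent_eigenvectors (h2 : (2 : k) ≠ 0)
    (hli : LinearIndependent k ![u, v, u * v]) : LinearIndependent k (eigenvectors u v) := by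
  rw [linearIndependent_iff_card_eq_finrank_span, Set.finrank] at hli ⊢
  rwa [span_range_eigenvectors h2, ← range_triple]

/-- `d` is a standard derivation of the quaternion algebra `Q` with trace-zero part `T`: there are
two anticommuting elements `w` of `T` with nonzero scalar squares, each mapped into `k + k w`. -/
def IsStandardDeriv (T : Submodule k Q) (d : Q → Q) : Prop :=
  ∃ w₁ w₂ : Q, w₁ ∈ T ∧ w₂ ∈ T ∧
    (∃ c : k, c ≠ 0 ∧ w₁ * w₁ = algebraMap k Q c) ∧
    (∃ c : k, c ≠ 0 ∧ w₂ * w₂ = algebraMap k Q c) ∧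
    w₂ * w₁ = -(w₁ * w₂) ∧
    (∃ c₁ c₂ : k, d w₁ = algebraMap k Q c₁ + algebraMap k Q c₂ * w₁) ∧
    (∃ c₁ c₂ : k, d w₂ = algebraMap k Q c₁ + algebraMap k Q c₂ * w₂)

theorem not_isStandardDeriv_of_forall_mem_smul [Nontrivial Q] (h2 : (2 : k) ≠ 0)
    {T : Submodule k Q} {d : Q → Q} (x : Q)
    (hT : ∀ w ∈ T, w * w ≠ 0 → (∃ c₁ c₂ : k, d w = algebraMap k Q c₁ + algebraMap k Q c₂ * w) →
      ∃ c : k, w = algebraMap k Q c * x) : ¬ IsStandardDeriv T d := by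
  have algebraMap_ne_zero {c : k} (hc : c ≠ 0) : algebraMap k Q c ≠ 0 :=
    (map_ne_zero (algebraMap k Q)).2 hc
  rintro ⟨w₁, w₂, hw₁, hw₂, ⟨s₁, hs₁, hsq₁⟩, ⟨s₂, hs₂, hsq₂⟩, hanti, hd₁, hd₂⟩
  obtain ⟨a, ha⟩ := hT w₁ hw₁ (hsq₁ ▸ algebraMap_ne_zero hs₁) hd₁
  obtain ⟨b, hb⟩ := hT w₂ hw₂ (hsq₂ ▸ algebraMap_ne_zero hs₂) hd₂
  have mul_comm_w : w₂ * w₁ = w₁ * w₂ := by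
    simp only [ha, hb, ← Algebra.smul_def, smul_mul_smul_comm, mul_comm a b]
  have mul_eq_zero_w : w₁ * w₂ = 0 := by
    have : (2 : k) • (w₁ * w₂) = 0 := by
      rw [two_smul, ← eq_neg_iff_add_eq_zero, ← hanti, mul_comm_w]
    exact (smul_eq_zero_iff_right h2).1 this
  have : algebraMap k Q (s₁ * s₂) = 0 := by
    rw [map_mul, ← hsq₁, ← hsq₂, mul_assoc, ← mul_assoc w₁ w₂, mul_eq_zero_w, zero_mul, mul_zero]
  exact algebraMap_ne_zero (mul_ne_zero hs₁ hs₂) this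

variable {R : Type*} [CommRing R] [Algebra R k] {δ : Derivation R k k} {d : Q → Q}

theorem apply_eigenvectors (hd : IsRingDeriv d) (hu : u * u = 1) (hdu : d u = 0) {β g : k}
    (hdv : d v = (δ β / (2 * β)) • v + (2 * g) • (u * v)) (i : Fin 3) :
    d (eigenvectors u v i) = eigenvalues δ β g i • eigenvectors u v i := by
  fin_cases i
  · exact hdu.trans (zero_smul k u).symm
  · exact apply_add_mul_of_eigenvector hd hu hdu hdv
  · exact apply_sub_mul_of_eigenvector hd hu hdu hdv

theorem eq_zero_of_apply_eq_algebraMap_add (h2 : (2 : k) ≠ 0)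
    (hli : LinearIndependent k ![1, u, v, u * v]) (hu : u * u = 1) (hd : IsRingDeriv d)
    (hdk : RestrictsTo δ d) (hdu : d u = 0) {β g : k}
    (hdv : d v = (δ β / (2 * β)) • v + (2 * g) • (u * v)) {w : Q}
    (hw : w ∈ Submodule.span k {u, v, u * v}) {c₁ c₂ : k}
    (hdw : d w = algebraMap k Q c₁ + algebraMap k Q c₂ * w) : c₁ = 0 := by
  by_contra hc₁
  have one_notMem : (1 : Q) ∉ Submodule.span k {u, v, u * v} := by
    simpa only [range_triple] using (linearIndependent_finCons.1 hli).2
  have dw_mem : d w ∈ Submodule.span k {u, v, u * v} := by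
    rw [← span_range_eigenvectors h2] at hw ⊢
    exact apply_mem_span_of_eigenvectors (D := AddMonoidHom.mk' d hd.map_add)
      (apply_smul_of_restrictsTo hd hdk) (apply_eigenvectors hd hu hdu hdv) hw
  rw [← Algebra.smul_def, Algebra.algebraMap_eq_smul_one] at hdw
  rw [hdw, Submodule.add_mem_iff_left _ (Submodule.smul_mem _ _ hw),
    Submodule.smul_mem_iff _ hc₁] at dw_mem
  exact one_notMem dw_mem

theorem exists_eq_mul_of_apply_eq [Nontrivial Q] {β g : k} (hβ : β ≠ 0)
    (hg : 4 * g ∉ logDerivs δ) (hu : u * u = 1) (hv : v * v = algebraMap k Q β)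
    (huv : v * u = -(u * v)) (hd : IsRingDeriv d) (hdk : RestrictsTo δ d) (hdu : d u = 0)
    (hdv : d v = (δ β / (2 * β)) • v + (2 * g) • (u * v)) {w : Q}
    (hw : w ∈ Submodule.span k {u, v, u * v}) (hsq : w * w ≠ 0)
    (hdw : ∃ c₁ c₂ : k, d w = algebraMap k Q c₁ + algebraMap k Q c₂ * w) :
    ∃ c : k, w = algebraMap k Q c * u := by
  obtain ⟨c₁, c₂, hdw⟩ := hdw
  have h2 := two_ne_zero_of_four_mul_notMem_logDerivs hg
  have hli : LinearIndependent k ![1, u, v, u * v] :=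
    linearIndependent_of_mul_eq_neg_mul h2 one_ne_zero hβ (by rw [hu, map_one]) hv huv
  obtain rfl : c₁ = 0 := eq_zero_of_apply_eq_algebraMap_add h2 hli hu hd hdk hdu hdv hw hdw
  have eigenvector_w : d w = c₂ • w := by rw [hdw, map_zero, zero_add, Algebra.smul_def]
  have w_ne_zero : w ≠ 0 := by rintro rfl; exact hsq (zero_mul 0)
  obtain ⟨i, c, rfl⟩ := exists_eq_smul_of_eigenvector (D := AddMonoidHom.mk' d hd.map_add)
    (apply_smul_of_restrictsTo hd hdk) (apply_eigenvectors hd hu hdu hdv)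
    (linearIndependent_eigenvectors h2 (linearIndependent_finCons.1 hli).1)
    (pairwise_eigenvalues_sub_notMem_logDerivs hβ hg) (span_range_eigenvectors h2 u v ▸ hw)
    w_ne_zero eigenvector_w
  rw [smul_mul_smul_comm] at hsq
  replace hsq : eigenvectors u v i * eigenvectors u v i ≠ 0 := right_ne_zero_of_smul hsq
  fin_cases i
  · exact ⟨c, Algebra.smul_def c u⟩
  · exact absurd (sq_add_mul_eq_zero hu huv) hsq
  · exact absurd (sq_sub_mul_eq_zero hu huv) hsq

theorem stmt_17_general [Nontrivial Q] {β g : k} (hβ : β ≠ 0) (hg : 4 * g ∉ logDerivs δ)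
    (hu : u * u = 1) (hv : v * v = algebraMap k Q β) (huv : v * u = -(u * v)) {w₀ : Q}
    (hw₀ : w₀ = -(algebraMap k Q g * u)) (hd : IsRingDeriv d) (hdk : RestrictsTo δ d)
    (hdu : d u = u * w₀ - w₀ * u)
    (hdv : d v = algebraMap k Q (δ β / (2 * β)) * v + (v * w₀ - w₀ * v)) :
    (∀ w ∈ Submodule.span k {u, v, u * v}, w * w ≠ 0 →
      (∃ c : k, d w = algebraMap k Q c * w) → ∃ c₀ : k, w = algebraMap k Q c₀ * u) ∧
    ¬ IsStandardDeriv (Submodule.span k {u, v, u * v}) d := by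
  rw [← Algebra.smul_def] at hw₀
  have hdu' : d u = 0 := by simp [hdu, hw₀]
  have hdv' : d v = (δ β / (2 * β)) • v + (2 * g) • (u * v) := by
    rw [hdv, hw₀, ← Algebra.smul_def, mul_neg, neg_mul, mul_smul_comm, smul_mul_assoc, huv]
    module
  have mem_smul_u := fun w hw ↦
    exists_eq_mul_of_apply_eq (w := w) hβ hg hu hv huv hd hdk hdu' hdv' hw
  exact ⟨fun w hw hsq ⟨c, hc⟩ ↦ mem_smul_u w hw hsq ⟨0, c, by rw [hc, map_zero, zero_add]⟩,
    not_isStandardDeriv_of_forall_mem_smul (two_ne_zero_of_four_mul_notMem_logDerivs hg) u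
      mem_smul_u⟩

end Quaternion

section RationalFunction

open Polynomial

theorem coeff_X_mul_derivative {R : Type*} [CommSemiring R] (P : R[X]) (n : ℕ) :
    (X * derivative P).coeff n = n * P.coeff n := by
  cases n with
  | zero => simp
  | succ n => rw [coeff_X_mul, coeff_derivative, mul_comm, Nat.cast_succ]

theorem coeff_X_mul_derivative_mul {R : Type*} [CommSemiring R] (P Q : R[X]) :
    (X * derivative P * Q).coeff (P.natDegree + Q.natDegree) =
      P.natDegree * (P.leadingCoeff * Q.leadingCoeff) := by
  have natDegree_le : (X * derivative P).natDegree ≤ P.natDegree :=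
    natDegree_le_iff_coeff_eq_zero.2 fun n hn ↦ by
      rw [coeff_X_mul_derivative, coeff_eq_zero_of_natDegree_lt hn, mul_zero]
  rw [coeff_mul_add_eq_of_natDegree_le natDegree_le le_rfl, coeff_X_mul_derivative, mul_assoc,
    coeff_natDegree, coeff_natDegree]

variable {R F : Type*} [CommRing R] [Field F] [Algebra R (RatFunc F)]
  {δ : Derivation R (RatFunc F) (RatFunc F)}

theorem deriv_algebraMap_eq_derivative (hC : ∀ c : F, δ (RatFunc.C c) = 0)
    (hX : δ RatFunc.X = 1) (P : F[X]) :
    δ (algebraMap F[X] (RatFunc F) P) = algebraMap F[X] (RatFunc F) (derivative P) := by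
  induction P using Polynomial.induction_on' with
  | add P Q hP hQ => simp only [map_add, hP, hQ]
  | monomial n a =>
    rw [derivative_monomial, ← C_mul_X_pow_eq_monomial, ← C_mul_X_pow_eq_monomial]
    simp only [map_mul, map_pow, map_natCast, RatFunc.algebraMap_C, RatFunc.algebraMap_X,
      δ.leibniz, δ.leibniz_pow, hC, hX, smul_eq_mul, nsmul_eq_mul, mul_one]
    ring

theorem intCast_intDegree_eq_of_deriv_eq (hC : ∀ c : F, δ (RatFunc.C c) = 0)
    (hX : δ RatFunc.X = 1) {f : RatFunc F} (hf : f ≠ 0) {c : F}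
    (h : δ f = RatFunc.C c / RatFunc.X * f) : (f.intDegree : F) = c := by
  set P := f.num
  set Q := f.denom
  have hQ : algebraMap F[X] (RatFunc F) Q ≠ 0 := RatFunc.algebraMap_ne_zero f.denom_ne_zero
  have hfQ : f * algebraMap F[X] (RatFunc F) Q = algebraMap F[X] (RatFunc F) P :=
    (div_eq_iff hQ).1 f.num_div_denom |>.symm
  have polynomial_identity : X * derivative P * Q = C c * (P * Q) + X * derivative Q * P := by
    apply RatFunc.algebraMap_injective F
    have leibniz := δ.leibniz f (algebraMap F[X] (RatFunc F) Q)
    rw [hfQ, h, deriv_algebraMap_eq_derivative hC hX, deriv_algebraMap_eq_derivative hC hX]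
      at leibniz
    simp only [map_mul, map_add, RatFunc.algebraMap_X, RatFunc.algebraMap_C, leibniz, ← hfQ,
      smul_eq_mul]
    have := RatFunc.X_ne_zero (K := F)
    field_simp
    ring
  have leadingCoeff_ne_zero : P.leadingCoeff * Q.leadingCoeff ≠ 0 :=
    mul_ne_zero (leadingCoeff_ne_zero.2 (RatFunc.num_ne_zero hf))
      (leadingCoeff_ne_zero.2 f.denom_ne_zero)
  have coeff_identity := congr(coeff $polynomial_identity (P.natDegree + Q.natDegree))
  rw [coeff_add, coeff_C_mul, coeff_mul_degree_add_degree, coeff_X_mul_derivative_mul,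
    add_comm P.natDegree, coeff_X_mul_derivative_mul] at coeff_identity
  rw [RatFunc.intDegree, Int.cast_sub, Int.cast_natCast, Int.cast_natCast]
  exact mul_right_cancel₀ leadingCoeff_ne_zero (by linear_combination coeff_identity)

theorem exists_intCast_eq_of_div_X_mem_logDerivs (hC : ∀ c : F, δ (RatFunc.C c) = 0)
    (hX : δ RatFunc.X = 1) {c : F} (hc : RatFunc.C c / RatFunc.X ∈ logDerivs δ) :
    ∃ n : ℤ, (n : F) = c :=
  let ⟨f, hf, h⟩ := hc
  ⟨f.intDegree, intCast_intDegree_eq_of_deriv_eq hC hX hf h⟩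

theorem one_div_two_mul_X_notMem_logDerivs {δ : Derivation ℚ (RatFunc ℚ) (RatFunc ℚ)}
    (hX : δ RatFunc.X = 1) : 1 / (2 * RatFunc.X) ∉ logDerivs δ := by
  have hC (q : ℚ) : δ (RatFunc.C q) = 0 := by
    rw [eq_ratCast, ← eq_ratCast (algebraMap ℚ (RatFunc ℚ)), δ.map_algebraMap]
  have C_half_div_X : RatFunc.C (1 / 2 : ℚ) / RatFunc.X = 1 / (2 * RatFunc.X) := by
    simp only [map_div₀, map_one, map_ofNat, div_div]
  rw [← C_half_div_X]
  intro hmem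
  obtain ⟨n, hn⟩ := exists_intCast_eq_of_div_X_mem_logDerivs hC hX hmem
  have two_mul_n : (n : ℚ) * 2 = 1 := by rw [hn]; norm_num
  norm_cast at two_mul_n
  omega

end RationalFunction

/-- An additive map satisfying the Leibniz rule, as a bundled derivation over `ℚ`. -/
def IsRingDeriv.toDerivation {A : Type*} [CommRing A] [Algebra ℚ A] {δ : A → A}
    (hδ : IsRingDeriv δ) : Derivation ℚ A A :=
  .mk' (AddMonoidHom.mk' δ hδ.map_add).toRatLinearMap fun a b ↦ by
    simpa [add_comm, mul_comm b] using hδ.leibniz a b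

/-- Let `k = ℚ(t)` with `t′ = 1`, `Q = (1, t)_k` and
`d = d_{(u,v)} + ∂_{−(1/(8t))u}`. Every trace-zero `w ∈ Q` with `w² ≠ 0` and
`d(w) ∈ k·w` lies in `k·u`; consequently `d` is not a standard derivation on `Q`. -/
theorem stmt_17
    (δk : RatFunc ℚ → RatFunc ℚ) (hδk : IsRingDeriv δk) (hX : δk RatFunc.X = 1)
    (Q : Type*) [Ring Q] [Algebra (RatFunc ℚ) Q]
    (u v : Q) (hu : u * u = 1)
    (hv : v * v = algebraMap (RatFunc ℚ) Q RatFunc.X)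
    (huv : v * u = -(u * v))
    (bQ : Module.Basis (Fin 4) (RatFunc ℚ) Q) (hbQ : ⇑bQ = ![1, u, v, u * v])
    (w₀ : Q) (hw₀ : w₀ = -(algebraMap (RatFunc ℚ) Q (1 / (8 * RatFunc.X)) * u))
    (d : Q → Q) (hd : IsRingDeriv d) (hdk : RestrictsTo δk d)
    (hdu : d u = u * w₀ - w₀ * u)
    (hdv : d v = algebraMap (RatFunc ℚ) Q (δk RatFunc.X / (2 * RatFunc.X)) * v
      + (v * w₀ - w₀ * v)) :
    (∀ w ∈ Submodule.span (RatFunc ℚ) ({u, v, u * v} : Set Q), w * w ≠ 0 →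
      (∃ c : RatFunc ℚ, d w = algebraMap (RatFunc ℚ) Q c * w) →
      ∃ c₀ : RatFunc ℚ, w = algebraMap (RatFunc ℚ) Q c₀ * u) ∧
    ¬ (∃ w₁ w₂ : Q,
        w₁ ∈ Submodule.span (RatFunc ℚ) ({u, v, u * v} : Set Q) ∧
        w₂ ∈ Submodule.span (RatFunc ℚ) ({u, v, u * v} : Set Q) ∧
        (∃ c : RatFunc ℚ, c ≠ 0 ∧ w₁ * w₁ = algebraMap (RatFunc ℚ) Q c) ∧
        (∃ c : RatFunc ℚ, c ≠ 0 ∧ w₂ * w₂ = algebraMap (RatFunc ℚ) Q c) ∧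
        w₂ * w₁ = -(w₁ * w₂) ∧
        (∃ c₁ c₂ : RatFunc ℚ, d w₁ = algebraMap (RatFunc ℚ) Q c₁
          + algebraMap (RatFunc ℚ) Q c₂ * w₁) ∧
        (∃ c₁ c₂ : RatFunc ℚ, d w₂ = algebraMap (RatFunc ℚ) Q c₁
          + algebraMap (RatFunc ℚ) Q c₂ * w₂)) := by
  have : Nontrivial Q := nontrivial_of_ne _ _ (bQ.ne_zero 0)
  have four_mul_g : (4 * (1 / (8 * RatFunc.X)) : RatFunc ℚ) = 1 / (2 * RatFunc.X) := by
    field_simp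
    norm_num
  exact stmt_17_general (δ := hδk.toDerivation) RatFunc.X_ne_zero
    (four_mul_g ▸ one_div_two_mul_X_notMem_logDerivs hX) hu hv huv hw₀ hd hdk hdu hdv
end
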